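/- For every internal point p, |N(p)| = (q^2-1)/4 if q ≡ 1 (mod 4), and |N(p)| = (q^2+3)/4 if q ≡ 3 (mod 4). -/

import Mathlib

/-!
Polarity reduces the count to quadratic forms. Let `Q(v) = v₁² - v₀v₂` with polarization `B`. For
`r ≠ p` the only line through `p` and `r` is the cross product `p × r`, whose discriminant is
`B(p, r)² - 4 Q(p) Q(r)` (`disc_cross`, `exists_passant_iff`). So `N(p) \ {p}` consists of the
points `r` for which both `Q(r)` and this discriminant are nonsquares (`joinSet`).

Each point has `q - 1` representatives (`card_joinSet_mul`), so it suffices to count vectors. Put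
`d = Q(p)`, a nonsquare, and split a vector as `t p + w` with `w` on the polar line of `p`, where
`Q` is the anisotropic form `m² - d u²`. Then `Q(t p + w) = d t² + Q(w)` and the discriminant is
`-4 d Q(w)` (`card_vectors`), so the conditions read: `-Q(w)` is a nonzero square and `d t² + Q(w)`
is a nonsquare. The form `m² - d u²` is the norm of `K(√d)` and takes each nonzero value exactly
`q + 1` times (`card_nrm_fibre`). Applying this once to `w` and once to the pairs `(s, t)` with
`-Q(w) = s²` gives `(q + 1)(q - 1)² / 4` vectors (`card_triples`), hence `(q² - 1) / 4` points.
When `q ≡ 3 (mod 4)` the point `p` itself is added; it lies on a passant because the set just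
counted is nonempty.
-/

open scoped Classical

noncomputable section

namespace ConicPaper

variable (K : Type) [Field K] [Fintype K]

/-- Points (and also lines, via homogeneous coordinates) of `PG(2,q)`. -/
abbrev Pt := Projectivization K (Fin 3 → K)

instance : Fintype (Pt K) := @Fintype.ofFinite _ (Quotient.finite _)

/-- `a` is a nonsquare in `K`. -/
def Nonsq (a : K) : Prop := ¬ IsSquare a

/-- The quadratic form `Q(x0,x1,x2) = x1^2 - x0*x2` defining the conic. -/
def Qf (v : Fin 3 → K) : K := v 1 ^ 2 - v 0 * v 2

/-- A point is internal when `Q` of (a representative of) it is a nonsquare. -/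
def Internal (p : Pt K) : Prop := Nonsq K (Qf K p.rep)

/-- A point is external when `Q` of it is a nonzero square. -/
def External (p : Pt K) : Prop := Qf K p.rep ≠ 0 ∧ IsSquare (Qf K p.rep)

/-- The point `p` lies on the line `ℓ = [b0,b1,b2]`. -/
def OnL (p ℓ : Pt K) : Prop :=
  p.rep 0 * ℓ.rep 0 + p.rep 1 * ℓ.rep 1 + p.rep 2 * ℓ.rep 2 = 0

/-- Discriminant `b1^2 - 4 b0 b2` of a line. -/
def lineDisc (ℓ : Pt K) : K := ℓ.rep 1 ^ 2 - 4 * ℓ.rep 0 * ℓ.rep 2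

/-- A line is a passant when its discriminant is a nonsquare. -/
def Passant (ℓ : Pt K) : Prop := Nonsq K (lineDisc K ℓ)

/-- A line is a secant when its discriminant is a nonzero square. -/
def Secant (ℓ : Pt K) : Prop := lineDisc K ℓ ≠ 0 ∧ IsSquare (lineDisc K ℓ)

/-- The incidence pairing of the vector `w` with the polar line
`p^⊥ = [z, -2y, x]` of the point `p = (x,y,z)`. -/
def perpDot (p : Pt K) (w : Fin 3 → K) : K :=
  w 0 * p.rep 2 + w 1 * (-2 * p.rep 1) + w 2 * p.rep 0

/-- The point `r` lies on the passant line `p^⊥`. -/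
def OnPerp (p r : Pt K) : Prop := perpDot K p r.rep = 0

/-- The (finite) set `I` of internal points, as a type. -/
abbrev Ipts := {p : Pt K // Internal K p}

instance : Fintype (Ipts K) := Fintype.ofFinite _

/-- `N(p)`: the internal points lying on at least one passant line through `p`;
`p` itself is excluded when `q ≡ 1 (mod 4)` and included when `q ≡ 3 (mod 4)`. -/
def NbhdSet (p : Pt K) : Set (Pt K) :=
  if Fintype.card K % 4 = 1 then
    {r | Internal K r ∧ r ≠ p ∧ ∃ ℓ, Passant K ℓ ∧ OnL K p ℓ ∧ OnL K r ℓ}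
  else
    {r | Internal K r ∧ ∃ ℓ, Passant K ℓ ∧ OnL K p ℓ ∧ OnL K r ℓ}

section Helpers

open Finset

set_option linter.unusedSectionVars false

variable {K : Type} [Field K] [Fintype K]

/-! ### Values of the norm form `m² - d u²` -/

lemma two_ne_zero_of_odd (hq : Odd (Fintype.card K)) : (2 : K) ≠ 0 := by
  refine Ring.two_ne_zero fun h => ?_
  have := FiniteField.even_card_of_char_two h
  rw [Nat.odd_iff] at hq
  omega

/-- The form `m² - d u²` on `K × K`, the norm form of `K(√d)` for `d` a nonsquare. -/
def nrm (d : K) (x : K × K) : K := x.1 ^ 2 - d * x.2 ^ 2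

lemma nrm_eq_zero {d : K} (hd : ¬ IsSquare d) {x : K × K} : nrm d x = 0 ↔ x = 0 := by
  constructor
  · intro h
    unfold nrm at h
    have hu : x.2 = 0 := by
      by_contra hu
      exact hd ⟨x.1 / x.2, by field_simp; linear_combination -h⟩
    have hm : x.1 = 0 := by
      rw [hu] at h
      simpa using h
    exact Prod.ext hm hu
  · rintro rfl
    simp [nrm]

open Polynomial in
lemma exists_nrm_eq (hq : Odd (Fintype.card K)) {d : K} (hd : ¬ IsSquare d) (c : K) :
    ∃ x, nrm d x = c := by
  have hd0 : d ≠ 0 := by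
    rintro rfl
    exact hd IsSquare.zero
  obtain ⟨a, b, hab⟩ := FiniteField.exists_root_sum_quadratic (R := K)
    (f := X ^ 2 - C c) (g := C (-d) * X ^ 2) (degree_X_pow_sub_C (by norm_num) _)
    (degree_C_mul_X_pow 2 (neg_ne_zero.2 hd0)) (Nat.odd_iff.1 hq)
  refine ⟨(a, b), ?_⟩
  simp at hab
  simp only [nrm]
  linear_combination hab

/-- Multiplication by an element of norm `c / c'` in `K(√d)` injects the fibre over `c'` into that
over `c`. -/
lemma card_nrm_fibre_le (hq : Odd (Fintype.card K)) {d : K} (hd : ¬ IsSquare d) {c c' : K}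
    (hc : c ≠ 0) (hc' : c' ≠ 0) :
    #{x : K × K | nrm d x = c'} ≤ #{x : K × K | nrm d x = c} := by
  obtain ⟨y, hy⟩ := exists_nrm_eq hq hd (c / c')
  have hy0 : nrm d y ≠ 0 := by
    rw [hy]
    exact div_ne_zero hc hc'
  refine card_le_card_of_injOn
    (fun x => (x.1 * y.1 + d * x.2 * y.2, x.1 * y.2 + x.2 * y.1)) ?_ ?_
  · intro x hx
    simp only [coe_filter, mem_univ, true_and, Set.mem_ofPred_eq] at hx ⊢
    have : nrm d (x.1 * y.1 + d * x.2 * y.2, x.1 * y.2 + x.2 * y.1) = nrm d x * nrm d y := by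
      simp only [nrm]
      ring
    rw [this, hx, hy]
    field_simp
  · intro x _ z _ h
    simp only [Prod.mk.injEq] at h
    obtain ⟨h1, h2⟩ := h
    unfold nrm at hy0
    refine Prod.ext (mul_right_cancel₀ hy0 ?_) (mul_right_cancel₀ hy0 ?_)
    · linear_combination y.1 * h1 - d * y.2 * h2
    · linear_combination y.1 * h2 - y.2 * h1

lemma card_nonzero_add_one : #{c : K | c ≠ 0} + 1 = Fintype.card K := by
  rw [filter_ne', card_erase_of_mem (mem_univ _), card_univ]
  have := Fintype.card_pos (α := K)
  omega

/-- The `q² - 1` nonzero pairs are spread evenly over the `q - 1` nonzero norms. -/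
lemma card_nrm_fibre (hq : Odd (Fintype.card K)) {d : K} (hd : ¬ IsSquare d) {c : K}
    (hc : c ≠ 0) : #{x : K × K | nrm d x = c} = Fintype.card K + 1 := by
  have h1 : #{x : K × K | x ≠ 0} = ∑ b ∈ ({c : K | c ≠ 0} : Finset K),
      #{x ∈ ({x : K × K | x ≠ 0} : Finset (K × K)) | nrm d x = b} := by
    refine card_eq_sum_card_fiberwise fun x hx => ?_
    simpa [nrm_eq_zero hd] using hx
  have h2 : ∀ b ∈ ({c : K | c ≠ 0} : Finset K),
      #{x ∈ ({x : K × K | x ≠ 0} : Finset (K × K)) | nrm d x = b}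
        = #{x : K × K | nrm d x = c} := by
    intro b hb
    have hb0 : b ≠ 0 := by simpa using hb
    rw [filter_filter]
    refine le_antisymm (le_trans (card_le_card ?_) (card_nrm_fibre_le hq hd hc hb0))
      (le_trans (card_nrm_fibre_le hq hd hb0 hc) (card_le_card ?_))
    · intro x
      simp
    · intro x
      simp only [mem_filter, mem_univ, true_and]
      intro hx
      refine ⟨fun h0 => hb0 ?_, hx⟩
      rw [← hx, nrm_eq_zero hd, h0]
  rw [sum_congr rfl h2, sum_const, smul_eq_mul, filter_ne', card_erase_of_mem (mem_univ _),
    card_univ, Fintype.card_prod] at h1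
  have h3 := card_nonzero_add_one (K := K)
  have h4 : 0 < #{c : K | c ≠ 0} := card_pos.2 ⟨1, by simp⟩
  refine Nat.eq_of_mul_eq_mul_left h4 ?_
  rw [← h1, ← h3]
  refine Nat.sub_eq_of_eq_add ?_
  ring

lemma card_nrm_filter (hq : Odd (Fintype.card K)) {d : K} (hd : ¬ IsSquare d) (R : K → Prop)
    [DecidablePred R] :
    #{x : K × K | nrm d x ≠ 0 ∧ R (nrm d x)}
      = (Fintype.card K + 1) * #{c : K | c ≠ 0 ∧ R c} := by
  rw [card_eq_sum_card_fiberwise (f := nrm d) (t := {c : K | c ≠ 0 ∧ R c})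
    (fun x hx => by simpa using hx), mul_comm, ← smul_eq_mul, ← sum_const]
  refine sum_congr rfl fun b hb => ?_
  simp only [mem_filter, mem_univ, true_and] at hb
  rw [← card_nrm_fibre hq hd hb.1, filter_filter]
  congr 1
  ext x
  simp only [mem_filter, mem_univ, true_and, and_iff_right_iff_imp]
  rintro rfl
  exact hb

/-! ### Squares and nonsquares -/

/-- The map `s ↦ -s²` is two-to-one on nonzero elements. -/
lemma card_neg_sq_filter (hq : Odd (Fintype.card K)) (R : K → Prop)
    [DecidablePred R] :
    #{s : K | s ≠ 0 ∧ R (-s ^ 2)} = 2 * #{c : K | c ≠ 0 ∧ IsSquare (-c) ∧ R c} := by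
  have h2 := two_ne_zero_of_odd hq
  rw [card_eq_sum_card_fiberwise (f := fun s => -s ^ 2)
    (t := {c : K | c ≠ 0 ∧ IsSquare (-c) ∧ R c})
    (fun x hx => by simpa [IsSquare.sq] using hx), mul_comm, ← smul_eq_mul, ← sum_const]
  refine sum_congr rfl fun b hb => ?_
  simp only [mem_filter, mem_univ, true_and] at hb
  obtain ⟨hb0, ⟨r, hr⟩, hR⟩ := hb
  obtain rfl : b = -r ^ 2 := by linear_combination -hr
  have hr0 : r ≠ 0 := by
    rintro rfl
    simp at hb0
  have hne : r ≠ -r := fun h => by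
    have : 2 * r = 0 := by linear_combination h
    exact (mul_ne_zero h2 hr0) this
  rw [filter_filter]
  refine Eq.trans (congrArg card ?_) (card_pair hne)
  ext x
  simp only [mem_filter, mem_univ, true_and, mem_insert, mem_singleton, neg_inj,
    sq_eq_sq_iff_eq_or_eq_neg]
  refine ⟨fun h => h.2, fun h => ⟨?_, h⟩⟩
  rcases h with rfl | rfl
  · exact ⟨hr0, hR⟩
  · exact ⟨neg_ne_zero.2 hr0, by simpa using hR⟩

lemma card_nonsquare_neg (hq : Odd (Fintype.card K)) :
    2 * #{c : K | c ≠ 0 ∧ ¬ IsSquare (-c)} + 1 = Fintype.card K := by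
  have h1 := card_neg_sq_filter hq (fun _ => True)
  have h2 := card_filter_add_card_filter_not (s := ({c : K | c ≠ 0} : Finset K))
    (fun c => IsSquare (-c))
  have h3 := card_nonzero_add_one (K := K)
  simp only [and_true, filter_filter] at h1 h2
  omega

/-- Coordinate form of the count: the vectors whose coordinate along `p` is `t` and whose component
on the polar line of `p` has coordinates `(m, u)`. -/
lemma card_triples (hq : Odd (Fintype.card K)) {d : K} (hd : ¬ IsSquare d) :
    4 * #{x : K × K × K | nrm d x.2 ≠ 0 ∧ IsSquare (-nrm d x.2) ∧
        ¬ IsSquare (d * x.1 ^ 2 + nrm d x.2)}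
      = (Fintype.card K + 1) * (Fintype.card K - 1) ^ 2 := by
  -- For fixed `t`, the norm takes each admissible value `q + 1` times.
  have h1 : #{x : K × K × K | nrm d x.2 ≠ 0 ∧ IsSquare (-nrm d x.2) ∧
        ¬ IsSquare (d * x.1 ^ 2 + nrm d x.2)} = (Fintype.card K + 1) *
        ∑ t : K, #{c : K | c ≠ 0 ∧ IsSquare (-c) ∧ ¬ IsSquare (d * t ^ 2 + c)} := by
    rw [card_filter, Fintype.sum_prod_type, mul_sum]
    refine sum_congr rfl fun t _ => ?_
    rw [← card_nrm_filter hq hd (fun c => IsSquare (-c) ∧ ¬ IsSquare (d * t ^ 2 + c)),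
      card_filter]
  have h2 : 2 * ∑ t : K, #{c : K | c ≠ 0 ∧ IsSquare (-c) ∧ ¬ IsSquare (d * t ^ 2 + c)}
      = #{x : K × K | x.1 ≠ 0 ∧ ¬ IsSquare (-nrm d x)} := by
    rw [card_filter, Fintype.sum_prod_type_right, mul_sum]
    refine sum_congr rfl fun t _ => ?_
    rw [← card_neg_sq_filter hq (fun c => ¬ IsSquare (d * t ^ 2 + c)), card_filter]
    refine sum_congr rfl fun s _ => ?_
    have : -nrm d (s, t) = d * t ^ 2 + -s ^ 2 := by
      simp only [nrm]
      ring
    rw [this]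
  -- The pairs with first coordinate zero have `-nrm = d t²`, a nonsquare exactly when `t ≠ 0`.
  have h3 : #{x : K × K | x.1 = 0 ∧ ¬ IsSquare (-nrm d x)} = #{t : K | t ≠ 0} := by
    symm
    refine card_bij (fun t _ => (0, t)) ?_ ?_ ?_
    · intro t ht
      have ht : t ≠ 0 := by simpa using ht
      simp only [mem_filter, mem_univ, true_and]
      unfold nrm
      rintro ⟨r, hr⟩
      exact hd ⟨r / t, by field_simp; linear_combination hr⟩
    · intro a _ b _ h
      simpa using h
    · rintro ⟨s, t⟩ h
      simp only [mem_filter, mem_univ, true_and] at h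
      obtain ⟨rfl, h⟩ := h
      refine ⟨t, ?_, rfl⟩
      simp only [mem_filter, mem_univ, true_and]
      rintro rfl
      simp [nrm] at h
  have h4 := card_nrm_filter hq hd (fun c => ¬ IsSquare (-c))
  have h5 := card_filter_add_card_filter_not
    (s := ({x : K × K | ¬ IsSquare (-nrm d x)} : Finset (K × K))) (fun x => x.1 = 0)
  have h6 : ({x : K × K | nrm d x ≠ 0 ∧ ¬ IsSquare (-nrm d x)} : Finset (K × K))
      = ({x : K × K | ¬ IsSquare (-nrm d x)} : Finset (K × K)) := by
    ext x
    simp only [mem_filter, mem_univ, true_and, and_iff_right_iff_imp]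
    intro h h0
    simp [h0] at h
  rw [h6] at h4
  simp only [filter_filter] at h5
  simp only [and_comm (b := _ = (0 : K)), and_comm (b := ¬ _ = (0 : K))] at h5
  have h7 := card_nonsquare_neg hq
  have h8 := card_nonzero_add_one (K := K)
  simp only [ne_eq] at *
  rw [h3] at h5
  rw [h1]
  generalize #{c : K | ¬ c = 0 ∧ ¬ IsSquare (-c)} = n at *
  generalize #{c : K | ¬ c = 0} = z at *
  rw [← h2, h4] at h5
  generalize ∑ t : K, #{c : K | ¬ c = 0 ∧ IsSquare (-c) ∧ ¬ IsSquare (d * t ^ 2 + c)} = S at *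
  rw [← h7] at h5 h8 ⊢
  obtain rfl : z = 2 * n := by omega
  simp only [Nat.add_sub_cancel]
  have : 2 * S = 2 * n ^ 2 := by nlinarith
  nlinarith

/-! ### Geometry: lines joining two points, and coordinates adapted to `p` -/

/-- Polarization of `Qf`. -/
def polB (p v : Fin 3 → K) : K := 2 * p 1 * v 1 - p 0 * v 2 - p 2 * v 0

/-- The discriminant of the line joining the points represented by `p` and `v`; see
`disc_cross`. -/
def joinDisc (p v : Fin 3 → K) : K := polB p v ^ 2 - 4 * Qf K p * Qf K v

open Matrix in
lemma disc_cross (p v : Fin 3 → K) :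
    (p ⨯₃ v) 1 ^ 2 - 4 * (p ⨯₃ v) 0 * (p ⨯₃ v) 2 = joinDisc p v := by
  simp [cross_apply, joinDisc, polB, Qf]
  ring

lemma isSquare_mul_sq {a c : K} (ha : a ≠ 0) : IsSquare (a ^ 2 * c) ↔ IsSquare c := by
  constructor
  · rintro ⟨r, hr⟩
    exact ⟨r / a, by field_simp; linear_combination hr⟩
  · rintro ⟨r, rfl⟩
    exact ⟨a * r, by ring⟩

lemma Qf_smul (a : K) (v : Fin 3 → K) : Qf K (a • v) = a ^ 2 * Qf K v := by
  simp [Qf]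
  ring

lemma joinDisc_smul (p : Fin 3 → K) (a : K) (v : Fin 3 → K) :
    joinDisc p (a • v) = a ^ 2 * joinDisc p v := by
  simp [joinDisc, polB, Qf]
  ring

lemma joinDisc_self (p : Fin 3 → K) : joinDisc p p = 0 := by
  simp [joinDisc, polB, Qf]
  ring

/-- The internal points other than `p` whose join with `p` is a passant, described through
representatives. -/
def joinSet (p : Pt K) : Set (Pt K) :=
  {r | ¬ IsSquare (Qf K r.rep) ∧ ¬ IsSquare (joinDisc p.rep r.rep)}

open Matrix in
lemma exists_passant_iff {p r : Pt K} (hne : r ≠ p) :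
    (∃ ℓ, Passant K ℓ ∧ OnL K p ℓ ∧ OnL K r ℓ) ↔ ¬ IsSquare (joinDisc p.rep r.rep) := by
  have hx : p.rep ⨯₃ r.rep ≠ 0 := by
    rw [crossProduct_ne_zero_iff_linearIndependent]
    have := (Projectivization.independent_pair_iff_ne p r).2 hne.symm
    rw [Projectivization.independent_iff] at this
    have e : Projectivization.rep ∘ ![p, r] = ![p.rep, r.rep] := by
      ext i
      fin_cases i <;> rfl
    rwa [e] at this
  constructor
  · rintro ⟨ℓ, hℓ, h1, h2⟩
    have h0 : ¬ LinearIndependent K ![ℓ.rep, p.rep ⨯₃ r.rep] := by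
      rw [← crossProduct_ne_zero_iff_linearIndependent, not_not,
        cross_cross_eq_smul_sub_smul']
      have e1 : p.rep ⬝ᵥ ℓ.rep = 0 := by rw [vec3_dotProduct]; exact h1
      have e2 : ℓ.rep ⬝ᵥ r.rep = 0 := by
        rw [dotProduct_comm, vec3_dotProduct]; exact h2
      rw [e1, e2]
      simp
    rw [LinearIndependent.pair_iff' ℓ.rep_nonzero] at h0
    push Not at h0
    obtain ⟨a, ha⟩ := h0
    have ha0 : a ≠ 0 := by
      rintro rfl
      exact hx (by rw [← ha, zero_smul])
    rw [← disc_cross, ← ha]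
    have : (a • ℓ.rep) 1 ^ 2 - 4 * (a • ℓ.rep) 0 * (a • ℓ.rep) 2 = a ^ 2 * lineDisc K ℓ := by
      simp [lineDisc]
      ring
    rw [this, isSquare_mul_sq ha0]
    exact hℓ
  · intro h
    obtain ⟨a, ha⟩ := Projectivization.exists_smul_eq_mk_rep K _ hx
    refine ⟨Projectivization.mk K _ hx, ?_, ?_, ?_⟩
    · unfold Passant Nonsq lineDisc
      rw [← ha]
      have : (a • p.rep ⨯₃ r.rep) 1 ^ 2 - 4 * (a • p.rep ⨯₃ r.rep) 0 * (a • p.rep ⨯₃ r.rep) 2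
          = (a : K) ^ 2 * joinDisc p.rep r.rep := by
        rw [← disc_cross]
        simp [Units.smul_def]
        ring
      rw [this, isSquare_mul_sq a.ne_zero]
      exact h
    · unfold OnL
      rw [← ha]
      simp [Units.smul_def, cross_apply]
      ring
    · unfold OnL
      rw [← ha]
      simp [Units.smul_def, cross_apply]
      ring

/-- Every projective point has `q - 1` representatives. -/
lemma card_joinSet_mul (p : Pt K) : (joinSet p).ncard * (Fintype.card K - 1)
    = #{v : Fin 3 → K | ¬ IsSquare (Qf K v) ∧ ¬ IsSquare (joinDisc p.rep v)} := by
  have hQ0 : ∀ v : Fin 3 → K, ¬ IsSquare (Qf K v) → v ≠ 0 := by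
    rintro v h rfl
    simp [Qf] at h
  rw [Set.ncard_eq_toFinset_card', ← Fintype.card_units, ← card_univ, ← card_product]
  refine card_bij (fun x _ => (x.2 : K) • x.1.rep) ?_ ?_ ?_
  · rintro ⟨r, a⟩ h
    simp only [mem_product, Set.mem_toFinset, mem_univ, and_true] at h
    simp only [mem_filter, mem_univ, true_and, Qf_smul, joinDisc_smul,
      isSquare_mul_sq a.ne_zero]
    exact h
  · rintro ⟨r, a⟩ _ ⟨s, b⟩ _ h
    simp only at h
    have hrs : r = s := by
      rw [← r.mk_rep, ← s.mk_rep, Projectivization.mk_eq_mk_iff']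
      refine ⟨(a : K)⁻¹ * b, ?_⟩
      rw [mul_smul, ← h, smul_smul]
      simp
    subst hrs
    have := smul_left_injective K r.rep_nonzero h
    rw [Units.ext this]
  · intro v hv
    simp only [mem_filter, mem_univ, true_and] at hv
    obtain ⟨a, ha⟩ := Projectivization.exists_smul_eq_mk_rep K v (hQ0 v hv.1)
    refine ⟨(Projectivization.mk K v (hQ0 v hv.1), a⁻¹), ?_, ?_⟩
    · simp only [mem_product, Set.mem_toFinset, mem_univ, and_true]
      change ¬ IsSquare _ ∧ ¬ IsSquare _
      rw [← ha, Units.smul_def, Qf_smul, joinDisc_smul, isSquare_mul_sq a.ne_zero,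
        isSquare_mul_sq a.ne_zero]
      exact hv
    · simp only [← ha, Units.smul_def, smul_smul]
      simp

/-- A product of two nonsquares of a finite field is a square, and a nonzero square times a
nonsquare is a nonsquare. -/
lemma isSquare_mul_iff_of_nonsquare {d c : K} (hd : ¬ IsSquare d) (hc : c ≠ 0) :
    ¬ IsSquare (d * c) ↔ IsSquare c := by
  have hd0 : d ≠ 0 := by
    rintro rfl
    exact hd IsSquare.zero
  rw [← quadraticChar_neg_one_iff_not_isSquare, ← quadraticChar_one_iff_isSquare hc, map_mul,
    quadraticChar_neg_one_iff_not_isSquare.2 hd]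
  constructor <;> intro h <;> linarith

/-- With respect to a suitable basis `p, e₁, e₂` one has
`Q(t p + m e₁ + u e₂) = d t² + m² - d u²` where `d = Q(p)`, and the join with `p` has
discriminant `-4 d (m² - d u²)`. -/
lemma card_vectors (hq : Odd (Fintype.card K)) (p : Fin 3 → K) (hp : ¬ IsSquare (Qf K p)) :
    #{v : Fin 3 → K | ¬ IsSquare (Qf K v) ∧ ¬ IsSquare (joinDisc p v)}
      = #{x : K × K × K | nrm (Qf K p) x.2 ≠ 0 ∧ IsSquare (-nrm (Qf K p) x.2) ∧
        ¬ IsSquare (Qf K p * x.1 ^ 2 + nrm (Qf K p) x.2)} := by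
  have h2 := two_ne_zero_of_odd hq
  have hx : p 0 ≠ 0 := by
    intro h
    apply hp
    rw [Qf, h]
    exact ⟨p 1, by ring⟩
  have hd0 : Qf K p ≠ 0 := by
    intro h
    exact hp (h ▸ IsSquare.zero)
  have hz : p 2 = (p 1 ^ 2 - Qf K p) / p 0 := by
    rw [eq_div_iff hx, Qf]
    ring
  set d := Qf K p with hd
  let f : K × K × K → (Fin 3 → K) := fun x =>
    ![p 0 * (x.1 + x.2.2), x.2.1 + p 1 * (x.1 + x.2.2),
      (d * (x.2.2 - x.1) + 2 * p 1 * x.2.1 + p 1 ^ 2 * (x.1 + x.2.2)) / p 0]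
  have hfQ : ∀ x, Qf K (f x) = d * x.1 ^ 2 + nrm d x.2 := by
    intro x
    simp [Qf, f, nrm]
    field_simp
    ring
  have hfD : ∀ x, joinDisc p (f x) = 2 ^ 2 * (d * -nrm d x.2) := by
    intro x
    have hB : polB p (f x) = 2 * d * x.1 := by
      simp [polB, f]
      rw [hz]
      field_simp
      ring
    rw [joinDisc, hB, hfQ, ← hd]
    ring
  have hinj : Function.Injective f := by
    rintro ⟨t, m, u⟩ ⟨t', m', u'⟩ h
    have e0 := congrFun h 0
    have e1 := congrFun h 1
    have e2 := congrFun h 2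
    simp [f, hx] at e0 e1 e2
    rw [e0] at e1 e2
    have em : m = m' := by simpa using e1
    subst em
    have e3 : u - t = u' - t' := mul_left_cancel₀ hd0 (by linear_combination e2)
    have et : t = t' := mul_left_cancel₀ h2 (by linear_combination e0 - e3)
    have eu : u = u' := mul_left_cancel₀ h2 (by linear_combination e0 + e3)
    rw [et, eu]
  have hbij : Function.Bijective f := by
    rw [Fintype.bijective_iff_injective_and_card]
    refine ⟨hinj, ?_⟩
    simp [Fintype.card_prod]
    ring
  symm
  refine card_bij (fun x _ => f x) ?_ (fun _ _ _ _ h => hinj h) ?_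
  · intro x h
    simp only [mem_filter, mem_univ, true_and] at h ⊢
    rw [hfQ, hfD, isSquare_mul_sq h2,
      isSquare_mul_iff_of_nonsquare hp (neg_ne_zero.2 h.1)]
    exact ⟨h.2.2, h.2.1⟩
  · intro v h
    obtain ⟨x, rfl⟩ := hbij.2 v
    refine ⟨x, ?_, rfl⟩
    simp only [mem_filter, mem_univ, true_and] at h ⊢
    rw [hfQ, hfD, isSquare_mul_sq h2] at h
    have h0 : nrm d x.2 ≠ 0 := by
      intro h0
      apply h.2
      simp [h0]
    rw [isSquare_mul_iff_of_nonsquare hp (neg_ne_zero.2 h0)] at h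
    exact ⟨h0, h.2, h.1⟩

lemma card_joinSet (hq : Odd (Fintype.card K)) (p : Pt K) (hp : Internal K p) :
    4 * (joinSet p).ncard + 1 = Fintype.card K ^ 2 := by
  have h1 := card_triples hq (d := Qf K p.rep) hp
  rw [← card_vectors hq _ hp, ← card_joinSet_mul] at h1
  have h2 := Fintype.one_lt_card (α := K)
  obtain ⟨n, hn⟩ : ∃ n, Fintype.card K = n + 2 := ⟨Fintype.card K - 2, by omega⟩
  rw [hn] at h1 ⊢
  have e : n + 2 - 1 = n + 1 := rfl
  rw [e] at h1
  have h3 : 4 * (joinSet p).ncard = (n + 3) * (n + 1) :=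
    Nat.eq_of_mul_eq_mul_right (m := n + 1) (by omega) (by linear_combination h1)
  rw [h3]
  ring

end Helpers

/-- `|N(p)| = (q^2-1)/4` if `q ≡ 1 (mod 4)`, and `(q^2+3)/4` if `q ≡ 3 (mod 4)`. -/
theorem card_NbhdSet (hq : Odd (Fintype.card K)) (p : Pt K) (hp : Internal K p) :
    (Fintype.card K % 4 = 1 →
      (NbhdSet K p).ncard = (Fintype.card K ^ 2 - 1) / 4) ∧
    (Fintype.card K % 4 = 3 →
      (NbhdSet K p).ncard = (Fintype.card K ^ 2 + 3) / 4) := by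
  have hc := card_joinSet hq p hp
  have hmem : ∀ r, r ∈ joinSet p ↔
      Internal K r ∧ r ≠ p ∧ ∃ ℓ, Passant K ℓ ∧ OnL K p ℓ ∧ OnL K r ℓ := by
    intro r
    constructor
    · rintro ⟨h1, h2⟩
      have hne : r ≠ p := by
        rintro rfl
        rw [joinDisc_self] at h2
        exact h2 IsSquare.zero
      exact ⟨h1, hne, (exists_passant_iff hne).2 h2⟩
    · rintro ⟨h1, hne, h2⟩
      exact ⟨h1, (exists_passant_iff hne).1 h2⟩
  constructor
  · intro h
    have : NbhdSet K p = joinSet p := by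
      ext r
      rw [NbhdSet, if_pos h, hmem]
      rfl
    rw [this]
    omega
  · intro h
    have hq1 := Fintype.one_lt_card (α := K)
    have hpos : 0 < (joinSet p).ncard := by
      have : 2 ^ 2 ≤ Fintype.card K ^ 2 := Nat.pow_le_pow_left hq1 2
      omega
    obtain ⟨s, hs⟩ := Set.nonempty_of_ncard_ne_zero hpos.ne'
    obtain ⟨-, -, ℓ, hℓ, hpℓ, -⟩ := (hmem s).1 hs
    have hset : NbhdSet K p = insert p (joinSet p) := by
      ext r
      rw [NbhdSet, if_neg (by omega), Set.mem_insert_iff, hmem]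
      constructor
      · rintro ⟨h1, h2⟩
        by_cases hr : r = p
        · exact Or.inl hr
        · exact Or.inr ⟨h1, hr, h2⟩
      · rintro (rfl | ⟨h1, -, h2⟩)
        · exact ⟨hp, ℓ, hℓ, hpℓ, hpℓ⟩
        · exact ⟨h1, h2⟩
    have hnot : p ∉ joinSet p := fun hmp => ((hmem p).1 hmp).2.1 rfl
    rw [hset, Set.ncard_insert_of_notMem hnot (Set.toFinite _)]
    omega

end ConicPaper
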